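/- arXiv:2110.02380 — 4 statements merged into one kernel-verified Lean document; each statement's English description precedes it below -/
import Mathlib

section
/- Let B be a dense *-subalgebra of a C*-algebra A which is closed under the C^∞-functional calculus of A. Then for every closed two-sided ideal I of A, the intersection I ∩ B is dense in I. -/
/-!
Given `x ∈ I`, choose `b ∈ B` near `x` and put `h = b⋆b`, so that `h` is within `δ` of
`x⋆x ∈ I`. If `f` is smooth, vanishes on `[-δ, δ]` and equals `1` outside `(-2δ, 2δ)`, then
`b f(h) ∈ B` is close to `b`, because `‖b - b f(h)‖² = ‖h (1 - f(h))²‖ ≤ 2δ`.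

Moreover `f(h)` lies in `I` itself, and not only in its closure: writing `f(h) = f(h) g(h) h` with
`‖g(h)‖ ≤ δ⁻¹`, the element `e = g(h) (h - x⋆x)` has norm less than `1`, and
`f(h) (1 - e) = f(h) g(h) x⋆x ∈ I`, where `1 - e` is invertible in the unitization.
-/

open scoped ContDiff

section NonUnitalNormedRing

variable {A : Type*} [NonUnitalNormedRing A] [CompleteSpace A]

theorem exists_sub_mul_eq_of_norm_lt_one {e : A} (he : ‖e‖ < 1) (c : A) :
    ∃ q, q - e * q = c := by
  have hcontr : ContractingWith ‖e‖₊ fun q ↦ c + e * q :=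
    ⟨he, LipschitzWith.of_dist_le_mul fun p q ↦ by
      simpa [dist_eq_norm, ← mul_sub] using norm_mul_le e (p - q)⟩
  exact ⟨hcontr.fixedPoint, sub_eq_iff_eq_add.2 hcontr.fixedPoint_isFixedPt.symm⟩

theorem mem_twoSidedIdeal_of_norm_lt_one_of_sub_mul_mem (I : TwoSidedIdeal A) {k e : A}
    (he : ‖e‖ < 1) (hk : k - k * e ∈ I) : k ∈ I := by
  obtain ⟨q, hq⟩ := exists_sub_mul_eq_of_norm_lt_one he e
  have hk_eq : k = (k - k * e) + (k - k * e) * q := by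
    calc
      k = (k - k * e) + k * (q - e * q) := by rw [hq, sub_add_cancel]
      _ = (k - k * e) + (k - k * e) * q := by noncomm_ring
  rw [hk_eq]
  exact I.add_mem hk (I.mul_mem_right _ _ hk)

end NonUnitalNormedRing

section NonUnitalCStarAlgebra

variable {A : Type*} [NonUnitalCStarAlgebra A]

theorem exists_norm_le_inv_and_cfcₙ_eq_mul_mul {a : A} (ha : IsSelfAdjoint a) {δ : ℝ}
    (hδ : 0 < δ) {f : ℝ → ℝ} (hf : ContinuousOn f (quasispectrum ℝ a))
    (hf_zero : ∀ t, |t| < δ → f t = 0) :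
    ∃ g : A, ‖g‖ ≤ δ⁻¹ ∧ cfcₙ f a = cfcₙ f a * g * a := by
  -- `t ↦ t⁻¹` for `δ ≤ |t|`, continued linearly through `0`
  let g : ℝ → ℝ := fun t ↦ t / max |t| δ ^ 2
  have hmax (t : ℝ) : 0 < max |t| δ := lt_max_of_lt_right hδ
  have hg : Continuous g :=
    continuous_id.div (by fun_prop) fun t ↦ (pow_pos (hmax t) 2).ne'
  have hg_zero : g 0 = 0 := zero_div _
  have hf0 : f 0 = 0 := hf_zero 0 (by simpa using hδ)
  have hmul : cfcₙ (fun t ↦ f t * g t * t) a = cfcₙ f a * cfcₙ g a * a := by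
    rw [cfcₙ_mul (fun t ↦ f t * g t) (fun t ↦ t) a (hf.mul hg.continuousOn) (by simp [hf0]),
      cfcₙ_mul f g a hf hf0 hg.continuousOn hg_zero, cfcₙ_id' ℝ a]
  have hfg (t : ℝ) : f t = f t * g t * t := by
    rcases lt_or_ge |t| δ with ht | ht
    · simp [hf_zero t ht]
    · have ht0 : t ≠ 0 := abs_pos.1 (hδ.trans_le ht)
      simp only [g, max_eq_left ht, sq_abs]
      field_simp
  refine ⟨cfcₙ g a, norm_cfcₙ_le fun t _ ↦ ?_, ?_⟩
  · calc
      ‖g t‖ = |t| / max |t| δ ^ 2 := by simp [g]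
      _ ≤ max |t| δ / max |t| δ ^ 2 := by gcongr; exact le_max_left _ _
      _ = (max |t| δ)⁻¹ := by field_simp [(hmax t).ne']
      _ ≤ δ⁻¹ := by gcongr; exact le_max_right _ _
  · exact (cfcₙ_congr fun t _ ↦ hfg t).trans hmul

theorem cfcₙ_mem_twoSidedIdeal_of_norm_sub_lt (I : TwoSidedIdeal A) {a y : A}
    (ha : IsSelfAdjoint a) (hy : y ∈ I) {δ : ℝ} (hδ : ‖a - y‖ < δ) {f : ℝ → ℝ}
    (hf : ContinuousOn f (quasispectrum ℝ a)) (hf_zero : ∀ t, |t| < δ → f t = 0) :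
    cfcₙ f a ∈ I := by
  have hδ_pos : 0 < δ := (norm_nonneg _).trans_lt hδ
  obtain ⟨g, hg_norm, hfg⟩ := exists_norm_le_inv_and_cfcₙ_eq_mul_mul ha hδ_pos hf hf_zero
  have hnorm : ‖g * (a - y)‖ < 1 := by
    calc
      ‖g * (a - y)‖ ≤ ‖g‖ * ‖a - y‖ := norm_mul_le _ _
      _ ≤ δ⁻¹ * ‖a - y‖ := by gcongr
      _ < δ⁻¹ * δ := by gcongr
      _ = 1 := inv_mul_cancel₀ hδ_pos.ne'
  have hsub : cfcₙ f a - cfcₙ f a * (g * (a - y)) = cfcₙ f a * g * y := by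
    rw [mul_sub, mul_sub, ← mul_assoc, ← mul_assoc, ← hfg, sub_sub_cancel]
  refine mem_twoSidedIdeal_of_norm_lt_one_of_sub_mul_mem I hnorm ?_
  rw [hsub]
  exact I.mul_mem_left _ _ hy

theorem norm_sub_mul_cfcₙ_star_mul_self_sq_le (b : A) {f : ℝ → ℝ}
    (hf : ContinuousOn f (quasispectrum ℝ (star b * b))) (hf_zero : f 0 = 0) {c : ℝ}
    (hc : ∀ t ∈ quasispectrum ℝ (star b * b), |t * (1 - f t) ^ 2| ≤ c) :
    ‖b - b * cfcₙ f (star b * b)‖ ^ 2 ≤ c := by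
  have hsa : IsSelfAdjoint (star b * b) := .star_mul_self b
  have hk : star (cfcₙ f (star b * b)) = cfcₙ f (star b * b) := IsSelfAdjoint.cfcₙ.star_eq
  have hexpand : (fun t ↦ t * (1 - f t) ^ 2) = fun t ↦ t - t * f t - (f t * t - f t * t * f t) := by
    ext t
    ring
  have hsq : star (b - b * cfcₙ f (star b * b)) * (b - b * cfcₙ f (star b * b)) =
      cfcₙ (fun t ↦ t * (1 - f t) ^ 2) (star b * b) := by
    rw [hexpand, cfcₙ_sub (fun t ↦ t - t * f t) (fun t ↦ f t * t - f t * t * f t) _,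
      cfcₙ_sub (fun t ↦ t) (fun t ↦ t * f t) _,
      cfcₙ_sub (fun t ↦ f t * t) (fun t ↦ f t * t * f t) _,
      cfcₙ_mul (fun t ↦ f t * t) f _, cfcₙ_mul f (fun t ↦ t) _, cfcₙ_mul (fun t ↦ t) f _,
      cfcₙ_id' ℝ (star b * b), star_sub, star_mul, hk]
    noncomm_ring
  rw [sq, ← CStarRing.norm_star_mul_self, hsq]
  exact norm_cfcₙ_le hc

theorem exists_contDiff_cfcₙ_mem_and_norm_sub_sq_le (I : TwoSidedIdeal A) {b y : A} (hy : y ∈ I)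
    {δ : ℝ} (hδ : ‖star b * b - y‖ < δ) :
    ∃ f : ℝ → ℝ, ContDiff ℝ ∞ f ∧ f 0 = 0 ∧ cfcₙ f (star b * b) ∈ I ∧
      ‖b - b * cfcₙ f (star b * b)‖ ^ 2 ≤ 2 * δ := by
  have hδ_pos : 0 < δ := (norm_nonneg _).trans_lt hδ
  let φ : ContDiffBump (0 : ℝ) := ⟨δ, 2 * δ, hδ_pos, by linarith⟩
  have hf : ContDiff ℝ ∞ fun t ↦ 1 - φ t := contDiff_const.sub φ.contDiff
  have hf_zero (t : ℝ) (ht : |t| ≤ δ) : 1 - φ t = 0 := by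
    rw [φ.one_of_mem_closedBall (by simpa using ht), sub_self]
  have hf0 : 1 - φ 0 = 0 := hf_zero 0 (by simpa using hδ_pos.le)
  refine ⟨fun t ↦ 1 - φ t, hf, hf0,
    cfcₙ_mem_twoSidedIdeal_of_norm_sub_lt I (.star_mul_self b) hy hδ hf.continuous.continuousOn
      fun t ht ↦ hf_zero t ht.le,
    norm_sub_mul_cfcₙ_star_mul_self_sq_le b hf.continuous.continuousOn hf0 fun t _ ↦ ?_⟩
  rw [sub_sub_cancel, abs_mul, abs_sq]
  rcases le_total (2 * δ) |t| with ht | ht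
  · rw [φ.zero_of_le_dist (by simpa [φ] using ht)]
    simpa using hδ_pos.le
  · calc
      |t| * φ t ^ 2 ≤ 2 * δ * 1 := by
        gcongr
        exact pow_le_one₀ φ.nonneg φ.le_one
      _ = 2 * δ := mul_one _

theorem ideal_inter_dense_of_smooth_calculus_general {S : Type*} [SetLike S A] [MulMemClass S A]
    (B : S) (hdense : Dense (B : Set A))
    (hsmooth : ∀ b ∈ B, ∀ f : ℝ → ℝ, ContDiff ℝ ∞ f → f 0 = 0 → cfcₙ f (star b * b) ∈ B)
    (I : TwoSidedIdeal A) :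
    (I : Set A) ⊆ closure (I ∩ B) := by
  intro x hx
  rw [Metric.mem_closure_iff]
  intro ε hε
  have hdist : Continuous fun b : A ↦ ‖x - b‖ := by fun_prop
  have hdist_sq : Continuous fun b : A ↦ ‖star b * b - star x * x‖ := by fun_prop
  obtain ⟨b, hbB, hxb, hb_sq⟩ := hdense.exists_mem_open
    ((isOpen_lt hdist (continuous_const (y := ε / 2))).inter
      (isOpen_lt hdist_sq (continuous_const (y := ε ^ 2 / 16))))
    ⟨x, by simp [hε]⟩
  obtain ⟨f, hf, hf0, hfI, hbf⟩ :=
    exists_contDiff_cfcₙ_mem_and_norm_sub_sq_le I (I.mul_mem_left (star x) x hx) hb_sq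
  have hbf_lt : ‖b - b * cfcₙ f (star b * b)‖ < ε / 2 :=
    lt_of_pow_lt_pow_left₀ 2 (half_pos hε).le (hbf.trans_lt (by linarith [pow_pos hε 2]))
  refine ⟨b * cfcₙ f (star b * b),
    ⟨I.mul_mem_left _ _ hfI, mul_mem hbB (hsmooth b hbB f hf hf0)⟩, ?_⟩
  calc
    dist x (b * cfcₙ f (star b * b)) ≤ dist x b + dist b (b * cfcₙ f (star b * b)) :=
      dist_triangle _ _ _
    _ < ε / 2 + ε / 2 := by
      rw [dist_eq_norm, dist_eq_norm]
      exact add_lt_add hxb hbf_lt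
    _ = ε := add_halves ε

theorem snd_cfc_inr (f : ℝ → ℝ) (hf : f 0 = 0) (a : A) :
    (cfc f (a : Unitization ℂ A)).snd = cfcₙ f a := by
  rw [← Unitization.real_cfcₙ_eq_cfc_inr a f hf, Unitization.snd_inr]

end NonUnitalCStarAlgebra

/-- Let `B` be a dense *-subalgebra of a C*-algebra `A` which is closed under the
C^∞-functional calculus of `A` (computed in the unitization `Ã`).  Then for every closed
two-sided ideal `I` of `A`, the intersection `I ∩ B` is dense in `I`. -/
theorem ideal_inter_dense_of_smooth_calculus
    {A : Type*} [NonUnitalCStarAlgebra A] [StarModule ℂ A]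
    (B : NonUnitalStarSubalgebra ℂ A)
    (hdense : Dense (B : Set A))
    (hsmooth : ∀ x : Unitization ℂ A, x.snd ∈ B → IsSelfAdjoint x →
      ∀ (U : Set ℝ) (f : ℝ → ℝ), IsOpen U → spectrum ℝ x ⊆ U → ContDiffOn ℝ (⊤ : ℕ∞) f U →
        (cfc f x).snd ∈ B)
    (I : Set A) (hI_closed : IsClosed I)
    (hI_zero : (0 : A) ∈ I)
    (hI_add : ∀ x ∈ I, ∀ y ∈ I, x + y ∈ I)
    (hI_smul : ∀ (c : ℂ), ∀ x ∈ I, c • x ∈ I)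
    (hI_mul_left : ∀ (a : A), ∀ x ∈ I, a * x ∈ I)
    (hI_mul_right : ∀ (a : A), ∀ x ∈ I, x * a ∈ I) :
    ∀ x ∈ I, x ∈ closure (I ∩ (B : Set A)) := by
  let J : TwoSidedIdeal A := .mk' I hI_zero (fun hx hy ↦ hI_add _ hx _ hy)
    (fun hx ↦ neg_one_smul ℂ (_ : A) ▸ hI_smul (-1) _ hx) (hI_mul_left _ _) (hI_mul_right _ _)
  have hJ : (J : Set A) = I := TwoSidedIdeal.coe_mk' ..
  have hcalc : ∀ b ∈ B, ∀ f : ℝ → ℝ, ContDiff ℝ ∞ f → f 0 = 0 → cfcₙ f (star b * b) ∈ B := by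
    intro b hb f hf hf0
    rw [← snd_cfc_inr f hf0]
    exact hsmooth _ (mul_mem (star_mem hb) hb)
      ((IsSelfAdjoint.star_mul_self b).inr ℂ) _ f isOpen_univ (Set.subset_univ _) hf.contDiffOn
  exact hJ ▸ ideal_inter_dense_of_smooth_calculus_general B hdense hcalc J
end

section
/- Let B be a dense *-subalgebra of a C*-algebra A which is spectrally invariant in A and closed under the C^∞-functional calculus of A. Then any C*-norm on B equals the restriction of the norm of A to B; in particular B admits a unique C*-norm. -/
/-!
If `a`, `b`, `m` are self-adjoint, `a` and `m` commute and `a² + m² = b²`, then `y = a + i m`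
satisfies `y⋆ y = b²` and `y + y⋆ = 2 a`, so `p a ≤ p b` for every C*-seminorm `p`. Closure under
the smooth functional calculus puts `m = √(b² - a²)` in `B` for suitable smooth functions `a`, `b`
of a self-adjoint `h ∈ B`. One comparison of this kind gives `p h ≤ ‖h‖`, another one and the
definiteness of `p` give `‖h‖ ≤ p h`, and the C*-identity passes from `b⋆ b` to `b`.
-/

open scoped ContDiff

/-- A C*-seminorm on a complex `*`-algebra: a submultiplicative seminorm satisfying the
C*-identity. Invariance under `star` follows, see `IsCStarSeminorm.map_star`. -/
structure IsCStarSeminorm {R : Type*} [NonUnitalRing R] [StarRing R] [Module ℂ R]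
    (p : Seminorm ℂ R) : Prop where
  map_mul_le (x y : R) : p (x * y) ≤ p x * p y
  map_star_mul_self (x : R) : p (star x * x) = p x ^ 2

namespace IsCStarSeminorm

variable {R : Type*} [NonUnitalRing R] [StarRing R] [Module ℂ R] {p : Seminorm ℂ R}

lemma map_star (hp : IsCStarSeminorm p) (x : R) : p (star x) = p x := by
  have le_star (y : R) : p y ≤ p (star y) := by
    by_contra! hlt
    have hsq : p y ^ 2 ≤ p (star y) * p y := hp.map_star_mul_self y ▸ hp.map_mul_le _ _
    nlinarith [apply_nonneg p (star y)]
  exact le_antisymm (by simpa using le_star (star x)) (le_star x)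

lemma map_mul_self (hp : IsCStarSeminorm p) {x : R} (hx : IsSelfAdjoint x) :
    p (x * x) = p x ^ 2 := by
  simpa only [hx.star_eq] using hp.map_star_mul_self x

variable [IsScalarTower ℂ R R] [SMulCommClass ℂ R R] [StarModule ℂ R]

lemma map_le_of_mul_self_add_mul_self_eq (hp : IsCStarSeminorm p) {a b m : R}
    (ha : IsSelfAdjoint a) (hb : IsSelfAdjoint b) (hm : IsSelfAdjoint m)
    (hcomm : Commute a m) (hsq : a * a + m * m = b * b) : p a ≤ p b := by
  set y := a + Complex.I • m with hy
  have hstar : star y = a - Complex.I • m := by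
    simp [hy, ha.star_eq, hm.star_eq, sub_eq_add_neg]
  have hyy : star y * y = b * b := by
    rw [hstar, hy, sub_mul, mul_add, mul_add, smul_mul_smul_comm, Complex.I_mul_I,
      mul_smul_comm, smul_mul_assoc, hcomm.eq, neg_one_smul, ← hsq]
    abel
  have hpy : p y = p b := by
    rw [← sq_eq_sq₀ (apply_nonneg p y) (apply_nonneg p b), ← hp.map_star_mul_self, hyy,
      hp.map_mul_self hb]
  have hre : (2 : ℂ) • a = y + star y := by
    rw [hstar, hy, two_smul]
    abel
  have hle : 2 * p a ≤ 2 * p b := calc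
    2 * p a = p (y + star y) := by rw [← hre, map_smul_eq_mul, Complex.norm_two]
    _ ≤ p y + p (star y) := map_add_le_add p _ _
    _ = 2 * p b := by rw [hp.map_star, hpy, two_mul]
  linarith

end IsCStarSeminorm

/-- The non-unital form of closure under the `C^∞`-functional calculus: `f(h)` stays in `B` for
every self-adjoint `h ∈ B` and every `f` with `f 0 = 0` that is smooth near the quasispectrum
of `h`. -/
def IsClosedUnderSmoothCFC {A : Type*} [NonUnitalNormedRing A] [StarRing A] [NormedSpace ℂ A]
    [IsScalarTower ℂ A A] [SMulCommClass ℂ A A]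
    [NonUnitalContinuousFunctionalCalculus ℝ A IsSelfAdjoint]
    (B : NonUnitalStarSubalgebra ℂ A) : Prop :=
  ∀ h ∈ B, IsSelfAdjoint h → ∀ (U : Set ℝ) (f : ℝ → ℝ), IsOpen U → quasispectrum ℝ h ⊆ U →
    ContDiffOn ℝ ∞ f U → f 0 = 0 → cfcₙ f h ∈ B

lemma isClosedUnderSmoothCFC_of_unitization {A : Type*} [NonUnitalCStarAlgebra A]
    {B : NonUnitalStarSubalgebra ℂ A}
    (hB : ∀ x : Unitization ℂ A, x.snd ∈ B → IsSelfAdjoint x →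
      ∀ (U : Set ℝ) (f : ℝ → ℝ), IsOpen U → spectrum ℝ x ⊆ U → ContDiffOn ℝ ∞ f U →
        (cfc f x).snd ∈ B) :
    IsClosedUnderSmoothCFC B := by
  intro h hhB hsa U f hU hsub hf h0
  have hmem := hB (h : Unitization ℂ A) (by simpa using hhB) (hsa.inr ℂ) U f hU
    (by rwa [← Unitization.quasispectrum_eq_spectrum_inr' ℝ ℂ]) hf
  simpa [← Unitization.real_cfcₙ_eq_cfc_inr h f h0] using hmem

lemma contDiff_mul_of_tsupport {𝕜 E 𝔸 : Type*} [NontriviallyNormedField 𝕜]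
    [NormedAddCommGroup E] [NormedSpace 𝕜 E] [NormedRing 𝔸] [NormedAlgebra 𝕜 𝔸]
    {n : WithTop ℕ∞} {f g : E → 𝔸} (hf : ContDiff 𝕜 n f)
    (hg : ∀ x ∈ tsupport f, ContDiffAt 𝕜 n g x) : ContDiff 𝕜 n fun x ↦ f x * g x := by
  refine contDiff_iff_contDiffAt.2 fun x ↦ ?_
  by_cases hx : x ∈ tsupport f
  · exact hf.contDiffAt.mul (hg x hx)
  · refine (contDiffAt_const (c := 0)).congr_of_eventuallyEq ?_
    filter_upwards [notMem_tsupport_iff_eventuallyEq.1 hx] with y hy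
    simp [hy]

lemma contDiff_mul_sqrt_sq_sub_sq {n : WithTop ℕ∞} {f : ℝ → ℝ} {r s : ℝ} (hf : ContDiff ℝ n f)
    (hfr : ∀ x, x ^ 2 ≤ r ^ 2 → f x = 0) (hsr : s ^ 2 < r ^ 2) :
    ContDiff ℝ n fun x ↦ f x * √(x ^ 2 - s ^ 2) := by
  have tsupport_subset : tsupport f ⊆ {x | r ^ 2 ≤ x ^ 2} :=
    closure_minimal (fun x hx ↦ (lt_of_not_ge (mt (hfr x) hx)).le)
      (isClosed_le continuous_const (by fun_prop))
  refine contDiff_mul_of_tsupport hf fun x hx ↦ ContDiffAt.sqrt (by fun_prop) ?_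
  exact (sub_pos.2 (hsr.trans_le (tsupport_subset hx))).ne'

section FunctionalCalculus

variable {A : Type*} [NonUnitalNormedRing A] [StarRing A] [NormedSpace ℂ A]
  [IsScalarTower ℂ A A] [SMulCommClass ℂ A A] [StarModule ℂ A]
  {B : NonUnitalStarSubalgebra ℂ A} {p : Seminorm ℂ B}

lemma IsCStarSeminorm.map_le_of_eq_cfcₙ [NonUnitalContinuousFunctionalCalculus ℝ A IsSelfAdjoint]
    (hp : IsCStarSeminorm p) {h : A} {f g k : ℝ → ℝ} {a b m : B}
    (ha : (a : A) = cfcₙ f h) (hb : (b : A) = cfcₙ g h) (hm : (m : A) = cfcₙ k h)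
    (hsq : ∀ x ∈ quasispectrum ℝ h, f x ^ 2 + k x ^ 2 = g x ^ 2)
    (hf : ContinuousOn f (quasispectrum ℝ h) := by cfc_cont_tac)
    (hf0 : f 0 = 0 := by cfc_zero_tac)
    (hg : ContinuousOn g (quasispectrum ℝ h) := by cfc_cont_tac)
    (hg0 : g 0 = 0 := by cfc_zero_tac)
    (hk : ContinuousOn k (quasispectrum ℝ h) := by cfc_cont_tac)
    (hk0 : k 0 = 0 := by cfc_zero_tac) : p a ≤ p b := by
  have isSelfAdjoint_of_eq {c : B} {u : ℝ → ℝ} (hc : (c : A) = cfcₙ u h) : IsSelfAdjoint c :=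
    Subtype.ext (by simpa [hc] using (cfcₙ_predicate u h : IsSelfAdjoint _).star_eq)
  refine hp.map_le_of_mul_self_add_mul_self_eq (isSelfAdjoint_of_eq ha) (isSelfAdjoint_of_eq hb)
    (isSelfAdjoint_of_eq hm) (Subtype.ext ?_) (Subtype.ext ?_)
  · simpa [ha, hm] using (cfcₙ_commute_cfcₙ f k h).eq
  · push_cast
    rw [ha, hb, hm, ← cfcₙ_mul f f h, ← cfcₙ_mul k k h, ← cfcₙ_mul g g h,
      ← cfcₙ_add (fun x ↦ f x * f x) (fun x ↦ k x * k x) h]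
    exact cfcₙ_congr fun x hx ↦ by simpa only [sq] using hsq x hx

variable [NonUnitalIsometricContinuousFunctionalCalculus ℝ A IsSelfAdjoint]

namespace IsCStarSeminorm

/-- With `f(x) = x²`, `g(x) = r x` and `k(x) = x √(r² - x²)`, the inequality `p(f(h)) ≤ p(g(h))`
reads `p(h)² ≤ r p(h)`. -/
lemma map_le_norm (hp : IsCStarSeminorm p) (hB : IsClosedUnderSmoothCFC B) {h : B}
    (hh : IsSelfAdjoint h) : p h ≤ ‖(h : A)‖ := by
  have hhA : IsSelfAdjoint (h : A) := congrArg Subtype.val hh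
  refine le_of_forall_gt_imp_ge_of_dense fun r hr ↦ ?_
  have hr0 : 0 < r := (norm_nonneg _).trans_lt hr
  have hspec : quasispectrum ℝ (h : A) ⊆ Set.Ioo (-r) r := fun x hx ↦
    abs_lt.1 ((norm_cfcₙ_lt_iff id (h : A) r).1 (by rwa [cfcₙ_id ℝ (h : A)]) x hx)
  have sq_lt {x : ℝ} (hx : x ∈ Set.Ioo (-r) r) : 0 < r ^ 2 - x ^ 2 := by
    nlinarith [hx.1, hx.2]
  have hm : cfcₙ (fun x ↦ x * √(r ^ 2 - x ^ 2)) (h : A) ∈ B :=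
    hB h h.2 hhA _ _ isOpen_Ioo hspec
      (contDiffOn_id.mul (ContDiffOn.sqrt (by fun_prop) fun x hx ↦ (sq_lt hx).ne')) (by simp)
  have hle : p (h * h) ≤ p ((r : ℂ) • h) :=
    hp.map_le_of_eq_cfcₙ (m := ⟨_, hm⟩) (f := fun x ↦ x * x) (g := fun x ↦ r * x)
      (by simp [cfcₙ_mul (fun x : ℝ ↦ x) (fun x ↦ x) (h : A), cfcₙ_id' ℝ (h : A)])
      (by simp [cfcₙ_const_mul_id r (h : A)]) rfl fun x hx ↦ by
        rw [mul_pow x √_, Real.sq_sqrt (sq_lt (hspec hx)).le]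
        ring
  rw [hp.map_mul_self hh, map_smul_eq_mul, Complex.norm_real, Real.norm_of_nonneg hr0.le] at hle
  nlinarith [apply_nonneg p h]

lemma mul_map_le_map_mul_of_eq_cfcₙ (hp : IsCStarSeminorm p) (hB : IsClosedUnderSmoothCFC B)
    {h k : B} (hh : IsSelfAdjoint h) {f : ℝ → ℝ} (hk : (k : A) = cfcₙ f (h : A)) {r s : ℝ}
    (hf : ContDiff ℝ ∞ f) (hfr : ∀ x, x ^ 2 ≤ r ^ 2 → f x = 0) (hs : 0 ≤ s) (hsr : s < r) :
    s * p k ≤ p (h * k) := by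
  have hhA : IsSelfAdjoint (h : A) := congrArg Subtype.val hh
  have hsq : s ^ 2 < r ^ 2 := by gcongr
  have hf0 : f 0 = 0 := hfr 0 (by simpa using sq_nonneg r)
  have hfc : Continuous f := hf.continuous
  have hm : cfcₙ (fun x ↦ f x * √(x ^ 2 - s ^ 2)) (h : A) ∈ B :=
    hB h h.2 hhA Set.univ _ isOpen_univ (Set.subset_univ _)
      (contDiff_mul_sqrt_sq_sub_sq hf hfr hsq).contDiffOn (by simp [hf0])
  have sq_add_sq (x : ℝ) : (s * f x) ^ 2 + (f x * √(x ^ 2 - s ^ 2)) ^ 2 = (x * f x) ^ 2 := by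
    rcases le_or_gt (x ^ 2) (r ^ 2) with hx | hx
    · simp [hfr x hx]
    · rw [mul_pow _ √_, Real.sq_sqrt (sub_nonneg.2 (hsq.trans hx).le)]
      ring
  have hle : p ((s : ℂ) • k) ≤ p (h * k) :=
    hp.map_le_of_eq_cfcₙ (m := ⟨_, hm⟩)
      (by simp [hk, cfcₙ_const_mul s f (h : A)])
      (by simp [hk, cfcₙ_mul (fun x : ℝ ↦ x) f (h : A), cfcₙ_id' ℝ (h : A)])
      rfl fun x _ ↦ sq_add_sq x
  rwa [map_smul_eq_mul, Complex.norm_real, Real.norm_of_nonneg hs] at hle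

/-- Take `k = f(h)` with `f` smooth and vanishing exactly on `[-r, r]`, where `p(h) < s < r < ‖h‖`.
Then `s p(k) ≤ p(h k) ≤ p(h) p(k)` forces `k = 0`, so the spectrum of `h` lies in `[-r, r]`. -/
lemma norm_le_map (hp : IsCStarSeminorm p) (hB : IsClosedUnderSmoothCFC B)
    (hdef : ∀ x, p x = 0 → x = 0) {h : B} (hh : IsSelfAdjoint h) : ‖(h : A)‖ ≤ p h := by
  have hhA : IsSelfAdjoint (h : A) := congrArg Subtype.val hh
  by_contra! hlt
  obtain ⟨s, hps, hs⟩ := exists_between hlt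
  obtain ⟨r, hsr, hr⟩ := exists_between hs
  have hs0 : 0 < s := (apply_nonneg p h).trans_lt hps
  let f : ℝ → ℝ := fun x ↦ expNegInvGlue (x ^ 2 - r ^ 2)
  have hf : ContDiff ℝ ∞ f := expNegInvGlue.contDiff.comp (by fun_prop)
  have f_eq_zero_iff (x : ℝ) : f x = 0 ↔ x ^ 2 ≤ r ^ 2 :=
    expNegInvGlue.zero_iff_nonpos.trans sub_nonpos
  have hf0 : f 0 = 0 := (f_eq_zero_iff 0).2 (by simpa using sq_nonneg r)
  let k : B := ⟨cfcₙ f (h : A),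
    hB h h.2 hhA Set.univ f isOpen_univ (Set.subset_univ _) hf.contDiffOn hf0⟩
  have hpk : p k = 0 := by
    have hle : s * p k ≤ p h * p k :=
      (hp.mul_map_le_map_mul_of_eq_cfcₙ hB hh rfl hf (fun x ↦ (f_eq_zero_iff x).2) hs0.le hsr).trans
        (hp.map_mul_le h k)
    nlinarith [apply_nonneg p k]
  have hk : cfcₙ f (h : A) = 0 := congrArg Subtype.val (hdef k hpk)
  have f_eq_zero : ∀ x ∈ quasispectrum ℝ (h : A), f x = 0 := fun x hx ↦ norm_le_zero_iff.1 <|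
    (norm_cfcₙ_le_iff f (h : A) 0 hf.continuous.continuousOn).1 (by simp [hk]) x hx
  refine hr.not_ge ?_
  rw [← cfcₙ_id ℝ (h : A)]
  exact norm_cfcₙ_le fun x hx ↦
    abs_le_of_sq_le_sq ((f_eq_zero_iff x).1 (f_eq_zero x hx)) (hs0.trans hsr).le

end IsCStarSeminorm

end FunctionalCalculus

theorem cstar_norm_unique_general
    {A : Type*} [NonUnitalNormedRing A] [StarRing A] [CStarRing A] [NormedSpace ℂ A]
    [IsScalarTower ℂ A A] [SMulCommClass ℂ A A] [StarModule ℂ A]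
    [NonUnitalIsometricContinuousFunctionalCalculus ℝ A IsSelfAdjoint]
    {B : NonUnitalStarSubalgebra ℂ A} (hB : IsClosedUnderSmoothCFC B)
    {p : Seminorm ℂ B} (hp : IsCStarSeminorm p) (hdef : ∀ x, p x = 0 → x = 0) (b : B) :
    p b = ‖(b : A)‖ := by
  have hsa : IsSelfAdjoint (star b * b) := .star_mul_self b
  have hsq : p (star b * b) = ‖((star b * b : B) : A)‖ :=
    le_antisymm (hp.map_le_norm hB hsa) (hp.norm_le_map hB hdef hsa)
  rw [hp.map_star_mul_self, NonUnitalStarSubalgebra.coe_mul, StarMemClass.coe_star,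
    CStarRing.norm_star_mul_self, ← sq] at hsq
  exact (sq_eq_sq₀ (apply_nonneg p b) (norm_nonneg _)).1 hsq

/-- Let `B` be a dense *-subalgebra of a C*-algebra `A` which is spectrally invariant in `A`
and closed under the C^∞-functional calculus of `A`.  Then every C*-norm on `B` coincides with
the restriction of `‖·‖_A` to `B`; in particular `B` admits a unique C*-norm. -/
theorem cstar_norm_unique
    {A : Type*} [NonUnitalCStarAlgebra A] [StarModule ℂ A]
    (B : NonUnitalStarSubalgebra ℂ A)
    (hdense : Dense (B : Set A))
    (hspec : ∀ x : Unitization ℂ A, x.snd ∈ B →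
      ∀ y : Unitization ℂ A, x * y = 1 → y * x = 1 → y.snd ∈ B)
    (hsmooth : ∀ x : Unitization ℂ A, x.snd ∈ B → IsSelfAdjoint x →
      ∀ (U : Set ℝ) (f : ℝ → ℝ), IsOpen U → spectrum ℝ x ⊆ U → ContDiffOn ℝ (⊤ : ℕ∞) f U →
        (cfc f x).snd ∈ B)
    (q : A → ℝ)
    (hq_nonneg : ∀ b ∈ B, 0 ≤ q b)
    (hq_definite : ∀ b ∈ B, q b = 0 → b = 0)
    (hq_smul : ∀ b ∈ B, ∀ c : ℂ, q (c • b) = ‖c‖ * q b)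
    (hq_add : ∀ b ∈ B, ∀ b' ∈ B, q (b + b') ≤ q b + q b')
    (hq_mul : ∀ b ∈ B, ∀ b' ∈ B, q (b * b') ≤ q b * q b')
    (hq_star : ∀ b ∈ B, q (star b) = q b)
    (hq_cstar : ∀ b ∈ B, q (star b * b) = q b ^ 2) :
    ∀ b ∈ B, q b = ‖b‖ := by
  exact fun b hb ↦ cstar_norm_unique_general
    (p := .of (fun x : B ↦ q x) (fun x y ↦ hq_add x x.2 y y.2) fun c x ↦ hq_smul x x.2 c)
    (isClosedUnderSmoothCFC_of_unitization hsmooth)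
    ⟨fun x y ↦ hq_mul x x.2 y y.2, fun x ↦ hq_cstar x x.2⟩
    (fun x hx ↦ Subtype.ext (hq_definite x x.2 hx)) ⟨b, hb⟩
end

section
/- Let C be a C*-algebra and b ∈ B^C(ℝ²). Define a(x,ξ) := ∫_{ℝ²} γ₂(s) γ₂(t) b(x−s, ξ−t) ds dt, where γ₂(t) = t e^{−t} for t ≥ 0 and γ₂(t) = 0 for t < 0. Then a ∈ B^C(ℝ²) and (1+∂_ξ)²(1+∂_x)² a = b; moreover a is the unique element of B^C(ℝ²) with this property, so D := (1+∂_ξ)²(1+∂_x)² is a bijection of B^C(ℝ²). -/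
open MeasureTheory

/-- Membership in `B^C(ℝ²)`: bounded smooth functions all of whose derivatives are bounded. -/
def IsBC {C : Type*} [NonUnitalCStarAlgebra C] (f : ℝ × ℝ → C) : Prop :=
  ContDiff ℝ (⊤ : ℕ∞) f ∧ ∀ k : ℕ, ∃ M : ℝ, ∀ p : ℝ × ℝ, ‖iteratedFDeriv ℝ k f p‖ ≤ M

/-- The function `γ₂`. -/
noncomputable def gamma2 (t : ℝ) : ℝ := if 0 ≤ t then t * Real.exp (-t) else 0

/-- The operator `1 + ∂ₓ` (derivative in the first variable). -/
noncomputable def onePlusDx {C : Type*} [NonUnitalCStarAlgebra C]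
    (f : ℝ × ℝ → C) : ℝ × ℝ → C :=
  fun p => f p + fderiv ℝ f p (1, 0)

/-- The operator `1 + ∂_ξ` (derivative in the second variable). -/
noncomputable def onePlusDxi {C : Type*} [NonUnitalCStarAlgebra C]
    (f : ℝ × ℝ → C) : ℝ × ℝ → C :=
  fun p => f p + fderiv ℝ f p (0, 1)

/-- The operator `D = (1+∂_ξ)²(1+∂ₓ)²`. -/
noncomputable def Dop {C : Type*} [NonUnitalCStarAlgebra C]
    (f : ℝ × ℝ → C) : ℝ × ℝ → C :=
  onePlusDxi (onePlusDxi (onePlusDx (onePlusDx f)))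

/-! On the line `t ↦ p - t v`, write `u`, `g`, `h` for the restrictions of `f`, `(1 + ∂_v) f` and
`(1 + ∂_v)² f`. Then `u' = u - g` and `g' = g - h`, so `-(t e^{-t} g + e^{-t} u)` is a primitive
of `t e^{-t} h`, and the convolution of `(1 + ∂_v)² f` with `γ₂` along `v` returns `f`. This
convolution commutes with `1 + ∂_v`, so it is a two-sided inverse of `(1 + ∂_v)²` on functions
with bounded derivatives. By Fubini, the double integral is the composition of two such inverses.
-/

open Filter Topology Set

section HasBoundedDerivs

variable {E F G : Type*} [NormedAddCommGroup E] [NormedSpace ℝ E]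
  [NormedAddCommGroup F] [NormedSpace ℝ F] [NormedAddCommGroup G] [NormedSpace ℝ G]

/-- The class `B^F(E)` of smooth functions `E → F` which are bounded together with each of their
iterated derivatives; it extends `IsBC` to arbitrary real normed spaces. -/
structure HasBoundedDerivs (f : E → F) : Prop where
  contDiff : ContDiff ℝ (⊤ : ℕ∞) f
  exists_norm_iteratedFDeriv_le (n : ℕ) : ∃ M : ℝ, ∀ p, ‖iteratedFDeriv ℝ n f p‖ ≤ M

theorem isBC_iff_hasBoundedDerivs {C : Type*} [NonUnitalCStarAlgebra C] {f : ℝ × ℝ → C} :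
    IsBC f ↔ HasBoundedDerivs f :=
  ⟨fun h => ⟨h.1, h.2⟩, fun h => ⟨h.1, h.2⟩⟩

namespace HasBoundedDerivs

variable {f g : E → F}

theorem exists_norm_le (hf : HasBoundedDerivs f) : ∃ M : ℝ, ∀ p, ‖f p‖ ≤ M := by
  simpa only [norm_iteratedFDeriv_zero] using hf.exists_norm_iteratedFDeriv_le 0

theorem differentiable (hf : HasBoundedDerivs f) : Differentiable ℝ f :=
  hf.contDiff.differentiable (by simp)

theorem fderiv (hf : HasBoundedDerivs f) : HasBoundedDerivs (fderiv ℝ f) where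
  contDiff := (contDiff_infty_iff_fderiv.1 hf.contDiff).2
  exists_norm_iteratedFDeriv_le n := by
    simpa only [norm_iteratedFDeriv_fderiv] using hf.exists_norm_iteratedFDeriv_le (n + 1)

theorem add (hf : HasBoundedDerivs f) (hg : HasBoundedDerivs g) : HasBoundedDerivs (f + g) where
  contDiff := hf.contDiff.add hg.contDiff
  exists_norm_iteratedFDeriv_le n := by
    obtain ⟨M, hM⟩ := hf.exists_norm_iteratedFDeriv_le n
    obtain ⟨N, hN⟩ := hg.exists_norm_iteratedFDeriv_le n
    refine ⟨M + N, fun p => ?_⟩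
    rw [iteratedFDeriv_add (contDiff_infty.1 hf.contDiff n) (contDiff_infty.1 hg.contDiff n)]
    exact norm_add_le_of_le (hM p) (hN p)

theorem clm_comp (L : F →L[ℝ] G) (hf : HasBoundedDerivs f) : HasBoundedDerivs (L ∘ f) where
  contDiff := L.contDiff.comp hf.contDiff
  exists_norm_iteratedFDeriv_le n := by
    obtain ⟨M, hM⟩ := hf.exists_norm_iteratedFDeriv_le n
    refine ⟨‖L‖ * M, fun p => ?_⟩
    calc ‖iteratedFDeriv ℝ n (L ∘ f) p‖ ≤ ‖L‖ * ‖iteratedFDeriv ℝ n f p‖ :=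
          L.norm_iteratedFDeriv_comp_left (contDiff_infty.1 hf.contDiff n).contDiffAt le_rfl
      _ ≤ ‖L‖ * M := by gcongr; exact hM p

theorem fderiv_apply (hf : HasBoundedDerivs f) (v : E) :
    HasBoundedDerivs fun p => _root_.fderiv ℝ f p v :=
  hf.fderiv.clm_comp (ContinuousLinearMap.apply ℝ F v)

end HasBoundedDerivs

/-- The operator `1 + ∂_v`, where `∂_v` is the derivative in the direction `v`. -/
noncomputable def onePlusDeriv (v : E) (f : E → F) : E → F :=
  fun p => f p + fderiv ℝ f p v

theorem HasBoundedDerivs.onePlusDeriv {f : E → F} (hf : HasBoundedDerivs f) (v : E) :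
    HasBoundedDerivs (onePlusDeriv v f) :=
  hf.add (hf.fderiv_apply v)

theorem Dop_eq_onePlusDeriv {C : Type*} [NonUnitalCStarAlgebra C] (f : ℝ × ℝ → C) :
    Dop f =
      onePlusDeriv (0, 1) (onePlusDeriv (0, 1) (onePlusDeriv (1, 0) (onePlusDeriv (1, 0) f))) :=
  rfl

theorem hasDerivAt_comp_sub_smul {f : E → F} (hf : Differentiable ℝ f) (p v : E) (t : ℝ) :
    HasDerivAt (fun t : ℝ => f (p - t • v)) (f (p - t • v) - onePlusDeriv v f (p - t • v)) t := by
  have hline : HasDerivAt (fun t : ℝ => p - t • v) (-v) t := by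
    simpa using ((hasDerivAt_id t).smul_const v).const_sub p
  exact ((hf (p - t • v)).hasFDerivAt.comp_hasDerivAt t hline).congr_deriv (by simp [onePlusDeriv])

end HasBoundedDerivs

section convolveAlong

variable {α β E F : Type*} [MeasurableSpace α] [MeasurableSpace β]
  [NormedAddCommGroup E] [NormedAddCommGroup F] [NormedSpace ℝ F]
  {μ : Measure α} {ν : Measure β} {k : α → ℝ} {l : β → ℝ} {φ : α → E} {ψ : β → E}
  {f : E → F} {M : ℝ}

/-- The average `p ↦ ∫ k(a) f(p - φ(a)) dμ(a)` of the translates of `f`, that is, the convolution of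
`f` with the image under `φ` of the signed measure `k μ`. Allowing an arbitrary map `φ` covers both
the convolution on the plane and the convolution along a single direction. -/
noncomputable def convolveAlong (μ : Measure α) (k : α → ℝ) (φ : α → E) (f : E → F) (p : E) : F :=
  ∫ a, k a • f (p - φ a) ∂μ

theorem integrable_smul_comp_sub (hk : Integrable k μ) (hφ : AEStronglyMeasurable φ μ)
    (hf : Continuous f) (hM : ∀ p, ‖f p‖ ≤ M) (p : E) :
    Integrable (fun a => k a • f (p - φ a)) μ :=
  hk.smul_bdd M (hf.comp_aestronglyMeasurable (aestronglyMeasurable_const.sub hφ))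
    (ae_of_all _ fun _ => hM _)

theorem norm_convolveAlong_le (hk : Integrable k μ) (hM : ∀ p, ‖f p‖ ≤ M) (p : E) :
    ‖convolveAlong μ k φ f p‖ ≤ (∫ a, ‖k a‖ ∂μ) * M := by
  rw [← integral_mul_const]
  refine norm_integral_le_of_norm_le (hk.norm.mul_const M) (ae_of_all _ fun a => ?_)
  rw [norm_smul]
  gcongr
  exact hM _

theorem convolveAlong_continuousLinearEquiv_comp {G : Type*} [NormedAddCommGroup G]
    [NormedSpace ℝ G] (L : F ≃L[ℝ] G) :
    convolveAlong μ k φ (L ∘ f) = L ∘ convolveAlong μ k φ f := by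
  funext p
  simp only [convolveAlong, Function.comp_apply, ← map_smul]
  exact L.integral_comp_comm _

theorem convolveAlong_prod [SFinite μ] [SFinite ν] (hk : Integrable k μ) (hl : Integrable l ν)
    (hφ : AEStronglyMeasurable φ μ) (hψ : AEStronglyMeasurable ψ ν)
    (hf : Continuous f) (hM : ∀ p, ‖f p‖ ≤ M) :
    convolveAlong (μ.prod ν) (fun q => k q.1 * l q.2) (fun q => φ q.1 + ψ q.2) f =
      convolveAlong μ k φ (convolveAlong ν l ψ f) := by
  funext p
  have hf_int :=
    integrable_smul_comp_sub (hk.mul_prod hl) (hφ.comp_fst.add hψ.comp_snd) hf hM p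
  calc _ = ∫ a, ∫ c, (k a * l c) • f (p - (φ a + ψ c)) ∂ν ∂μ := integral_prod _ hf_int
    _ = _ := by simp only [convolveAlong, mul_smul, integral_smul, sub_sub]

variable [NormedSpace ℝ E]

theorem hasFDerivAt_convolveAlong {M' : ℝ} (hk : Integrable k μ) (hφ : AEStronglyMeasurable φ μ)
    (hf : ContDiff ℝ 1 f) (hM : ∀ p, ‖f p‖ ≤ M) (hM' : ∀ p, ‖fderiv ℝ f p‖ ≤ M') (p : E) :
    HasFDerivAt (convolveAlong μ k φ f) (convolveAlong μ k φ (fderiv ℝ f) p) p := by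
  have hf_int := integrable_smul_comp_sub hk hφ hf.continuous hM
  have hf'_int := integrable_smul_comp_sub hk hφ (hf.continuous_fderiv one_ne_zero) hM'
  refine hasFDerivAt_integral_of_dominated_of_fderiv_le
    (F' := fun x a => k a • fderiv ℝ f (x - φ a)) (bound := fun a => ‖k a‖ * M') univ_mem
    (.of_forall fun x => (hf_int x).1) (hf_int p) (hf'_int p).1 (ae_of_all _ fun a x _ => ?_)
    (hk.norm.mul_const M') (ae_of_all _ fun a x _ => ?_)
  · rw [norm_smul]
    gcongr
    exact hM' _
  · have hfx := (hf.differentiable one_ne_zero (x - φ a)).hasFDerivAt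
    exact (hfx.comp x ((hasFDerivAt_id x).sub_const (φ a))).const_smul (k a)

theorem HasBoundedDerivs.integrable_smul_comp_sub (hf : HasBoundedDerivs f) (hk : Integrable k μ)
    (hφ : AEStronglyMeasurable φ μ) (p : E) : Integrable (fun a => k a • f (p - φ a)) μ :=
  let ⟨_, hM⟩ := hf.exists_norm_le
  _root_.integrable_smul_comp_sub hk hφ hf.contDiff.continuous hM p

theorem hasFDerivAt_convolveAlong_iteratedFDeriv (hf : HasBoundedDerivs f)
    (hk : Integrable k μ) (hφ : AEStronglyMeasurable φ μ) (n : ℕ) (p : E) :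
    HasFDerivAt (convolveAlong μ k φ (iteratedFDeriv ℝ n f))
      (convolveAlong μ k φ (iteratedFDeriv ℝ (n + 1) f) p).curryLeft p := by
  obtain ⟨M, hM⟩ := hf.exists_norm_iteratedFDeriv_le n
  obtain ⟨M', hM'⟩ := hf.exists_norm_iteratedFDeriv_le (n + 1)
  let curryLeft := continuousMultilinearCurryLeftEquiv ℝ (fun _ : Fin (n + 1) => E) F
  have hcurry : convolveAlong μ k φ (fderiv ℝ (iteratedFDeriv ℝ n f)) =
      curryLeft ∘ convolveAlong μ k φ (iteratedFDeriv ℝ (n + 1) f) :=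
    convolveAlong_continuousLinearEquiv_comp (G := E →L[ℝ] E [×n]→L[ℝ] F)
      (f := iteratedFDeriv ℝ (n + 1) f) curryLeft.toContinuousLinearEquiv
  refine (hasFDerivAt_convolveAlong hk hφ
    (hf.contDiff.iteratedFDeriv_right (by norm_cast; exact le_top)) hM
    (by simpa only [norm_fderiv_iteratedFDeriv] using hM') p).congr_fderiv ?_
  exact congrFun hcurry p

theorem hasFTaylorSeriesUpTo_convolveAlong (hf : HasBoundedDerivs f)
    (hk : Integrable k μ) (hφ : AEStronglyMeasurable φ μ) :
    HasFTaylorSeriesUpTo (⊤ : ℕ∞) (convolveAlong μ k φ f)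
      fun p n => convolveAlong μ k φ (iteratedFDeriv ℝ n f) p := by
  have hderiv := hasFDerivAt_convolveAlong_iteratedFDeriv hf hk hφ
  have hzero : convolveAlong μ k φ (iteratedFDeriv ℝ 0 f) =
      (continuousMultilinearCurryFin0 ℝ E F).symm ∘ convolveAlong μ k φ f :=
    convolveAlong_continuousLinearEquiv_comp
      (continuousMultilinearCurryFin0 ℝ E F).symm.toContinuousLinearEquiv
  exact ⟨fun p => by rw [hzero]; rfl, fun n _ => hderiv n,
    fun n _ => Differentiable.continuous fun p => (hderiv n p).differentiableAt⟩

theorem HasBoundedDerivs.convolveAlong (hf : HasBoundedDerivs f) (hk : Integrable k μ)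
    (hφ : AEStronglyMeasurable φ μ) : HasBoundedDerivs (convolveAlong μ k φ f) := by
  have htaylor := hasFTaylorSeriesUpTo_convolveAlong hf hk hφ
  refine ⟨htaylor.contDiff, fun n => ?_⟩
  obtain ⟨M, hM⟩ := hf.exists_norm_iteratedFDeriv_le n
  refine ⟨(∫ a, ‖k a‖ ∂μ) * M, fun p => ?_⟩
  rw [← htaylor.eq_iteratedFDeriv (by exact_mod_cast le_top)]
  exact norm_convolveAlong_le hk hM p

theorem onePlusDeriv_convolveAlong (hf : HasBoundedDerivs f) (hk : Integrable k μ)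
    (hφ : AEStronglyMeasurable φ μ) (v : E) :
    onePlusDeriv v (convolveAlong μ k φ f) = convolveAlong μ k φ (onePlusDeriv v f) := by
  funext p
  obtain ⟨M, hM⟩ := hf.exists_norm_le
  obtain ⟨M', hM'⟩ := hf.fderiv.exists_norm_le
  have hf_int := hf.integrable_smul_comp_sub hk hφ p
  have hf'_int := hf.fderiv.integrable_smul_comp_sub hk hφ p
  have hfderiv := (hasFDerivAt_convolveAlong hk hφ (contDiff_infty.1 hf.contDiff 1) hM hM' p).fderiv
  calc _ = ∫ a, k a • f (p - φ a) ∂μ + (∫ a, k a • fderiv ℝ f (p - φ a) ∂μ) v := by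
        rw [onePlusDeriv, hfderiv]; rfl
    _ = ∫ a, (k a • f (p - φ a) + (k a • fderiv ℝ f (p - φ a)) v) ∂μ := by
        rw [ContinuousLinearMap.integral_apply hf'_int,
          integral_add hf_int (hf'_int.apply_continuousLinearMap v)]
    _ = _ := by simp only [convolveAlong, onePlusDeriv, smul_add, smul_apply]

end convolveAlong

section gamma2

theorem gamma2_eq_indicator : gamma2 = (Ioi 0).indicator fun t => t * Real.exp (-t) := by
  ext t
  rcases lt_trichotomy t 0 with ht | rfl | ht
  · simp [gamma2, ht.not_ge, ht.le]
  · simp [gamma2]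
  · simp [gamma2, ht, ht.le]

theorem integrable_gamma2 : Integrable gamma2 := by
  rw [gamma2_eq_indicator, integrable_indicator_iff measurableSet_Ioi]
  refine (Real.GammaIntegral_convergent two_pos).congr_fun (fun t _ => ?_) measurableSet_Ioi
  norm_num [mul_comm]

variable {E F : Type*} [NormedAddCommGroup E] [NormedSpace ℝ E]
  [NormedAddCommGroup F] [NormedSpace ℝ F]

theorem tendsto_pow_mul_exp_neg_smul {u : ℝ → F} {M : ℝ} (hM : ∀ t, ‖u t‖ ≤ M) (n : ℕ) :
    Tendsto (fun t : ℝ => (t ^ n * Real.exp (-t)) • u t) atTop (𝓝 0) :=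
  NormedField.tendsto_zero_smul_of_tendsto_zero_of_bounded
    (Real.tendsto_pow_mul_exp_neg_atTop_nhds_zero n) (isBoundedUnder_of ⟨M, hM⟩)

theorem integral_gamma2_smul [CompleteSpace F] {u g h : ℝ → F} {M N : ℝ}
    (hu : ∀ t, HasDerivAt u (u t - g t) t) (hg : ∀ t, HasDerivAt g (g t - h t) t)
    (hM : ∀ t, ‖u t‖ ≤ M) (hN : ∀ t, ‖g t‖ ≤ N) (hh : Integrable fun t => gamma2 t • h t) :
    ∫ t, gamma2 t • h t = u 0 := by
  have hprimitive (t : ℝ) (ht : t ∈ Ici 0) :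
      HasDerivAt (fun t => -((t * Real.exp (-t)) • g t + Real.exp (-t) • u t))
        (gamma2 t • h t) t := by
    have hexp : HasDerivAt (fun t : ℝ => Real.exp (-t)) (-Real.exp (-t)) t := by
      simpa using (hasDerivAt_neg t).exp
    have hmul : HasDerivAt (fun t : ℝ => t * Real.exp (-t))
        (Real.exp (-t) - t * Real.exp (-t)) t :=
      ((hasDerivAt_id t).mul hexp).congr_deriv (by simp [sub_eq_add_neg])
    refine ((hmul.smul (hg t)).add (hexp.smul (hu t))).neg.congr_deriv ?_
    rw [gamma2, if_pos (mem_Ici.1 ht)]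
    module
  have htendsto : Tendsto (fun t => -((t * Real.exp (-t)) • g t + Real.exp (-t) • u t))
      atTop (𝓝 0) := by
    simpa using
      ((tendsto_pow_mul_exp_neg_smul hN 1).add (tendsto_pow_mul_exp_neg_smul hM 0)).neg
  calc ∫ t, gamma2 t • h t = ∫ t in Ioi 0, gamma2 t • h t :=
        (setIntegral_eq_integral_of_forall_compl_eq_zero fun t ht => by
          rw [gamma2_eq_indicator, indicator_of_notMem ht, zero_smul]).symm
    _ = u 0 := by
        rw [integral_Ioi_of_hasDerivAt_of_tendsto' hprimitive hh.integrableOn htendsto]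
        simp

/-- Convolution with `γ₂` along the direction `v`, which inverts `(1 + ∂_v)²`. -/
noncomputable def gamma2Convolve (v : E) (f : E → F) : E → F :=
  convolveAlong volume gamma2 (fun t => t • v) f

variable {f : E → F}

theorem aestronglyMeasurable_smul_const (v : E) : AEStronglyMeasurable (fun t : ℝ => t • v) :=
  (continuous_id.smul continuous_const).aestronglyMeasurable

theorem HasBoundedDerivs.gamma2Convolve (hf : HasBoundedDerivs f) (v : E) :
    HasBoundedDerivs (gamma2Convolve v f) :=
  hf.convolveAlong integrable_gamma2 (aestronglyMeasurable_smul_const v)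

theorem gamma2Convolve_onePlusDeriv_sq [CompleteSpace F] (hf : HasBoundedDerivs f) (v : E) :
    gamma2Convolve v (onePlusDeriv v (onePlusDeriv v f)) = f := by
  funext p
  have hg := hf.onePlusDeriv v
  obtain ⟨M, hM⟩ := hf.exists_norm_le
  obtain ⟨N, hN⟩ := hg.exists_norm_le
  have hh := (hg.onePlusDeriv v).integrable_smul_comp_sub integrable_gamma2
    (aestronglyMeasurable_smul_const v) p
  calc _ = f (p - (0 : ℝ) • v) :=
        integral_gamma2_smul (hasDerivAt_comp_sub_smul hf.differentiable p v)
          (hasDerivAt_comp_sub_smul hg.differentiable p v) (fun _ => hM _) (fun _ => hN _) hh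
    _ = f p := by rw [zero_smul, sub_zero]

theorem onePlusDeriv_sq_gamma2Convolve [CompleteSpace F] (hf : HasBoundedDerivs f) (v : E) :
    onePlusDeriv v (onePlusDeriv v (gamma2Convolve v f)) = f := by
  have hφ := aestronglyMeasurable_smul_const v
  calc _ = gamma2Convolve v (onePlusDeriv v (onePlusDeriv v f)) := by
        unfold gamma2Convolve
        rw [onePlusDeriv_convolveAlong hf integrable_gamma2 hφ,
          onePlusDeriv_convolveAlong (hf.onePlusDeriv v) integrable_gamma2 hφ]
    _ = f := gamma2Convolve_onePlusDeriv_sq hf v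

theorem integral_gamma2_mul_gamma2_smul (hf : HasBoundedDerivs f) (v w : E) :
    (fun p => ∫ q : ℝ × ℝ, (gamma2 q.1 * gamma2 q.2) • f (p - (q.1 • v + q.2 • w))) =
      gamma2Convolve v (gamma2Convolve w f) :=
  let ⟨_, hM⟩ := hf.exists_norm_le
  convolveAlong_prod integrable_gamma2 integrable_gamma2 (aestronglyMeasurable_smul_const v)
    (aestronglyMeasurable_smul_const w) hf.contDiff.continuous hM

end gamma2

theorem Dop_bijective_general {E F : Type*} [NormedAddCommGroup E] [NormedSpace ℝ E]
    [NormedAddCommGroup F] [NormedSpace ℝ F] [CompleteSpace F] (v w : E)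
    (b : E → F) (hb : HasBoundedDerivs b) :
    HasBoundedDerivs (fun p =>
        ∫ q : ℝ × ℝ, (gamma2 q.1 * gamma2 q.2) • b (p - (q.1 • v + q.2 • w))) ∧
    onePlusDeriv w (onePlusDeriv w (onePlusDeriv v (onePlusDeriv v fun p =>
        ∫ q : ℝ × ℝ, (gamma2 q.1 * gamma2 q.2) • b (p - (q.1 • v + q.2 • w))))) = b ∧
    ∀ a : E → F, HasBoundedDerivs a →
      onePlusDeriv w (onePlusDeriv w (onePlusDeriv v (onePlusDeriv v a))) = b →
      a = fun p =>
        ∫ q : ℝ × ℝ, (gamma2 q.1 * gamma2 q.2) • b (p - (q.1 • v + q.2 • w)) := by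
  rw [integral_gamma2_mul_gamma2_smul hb]
  have hwb := hb.gamma2Convolve w
  refine ⟨hwb.gamma2Convolve v, ?_, fun a ha hab => ?_⟩
  · rw [onePlusDeriv_sq_gamma2Convolve hwb, onePlusDeriv_sq_gamma2Convolve hb]
  · rw [← hab, gamma2Convolve_onePlusDeriv_sq ((ha.onePlusDeriv v).onePlusDeriv v),
      gamma2Convolve_onePlusDeriv_sq ha]

/-- For `b ∈ B^C(ℝ²)`, the function
`a(x,ξ) = ∫ γ₂(s) γ₂(t) b(x−s, ξ−t) ds dt` belongs to `B^C(ℝ²)` and is the unique solution of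
`(1+∂_ξ)²(1+∂ₓ)² a = b`; in particular `D` is a bijection of `B^C(ℝ²)`. -/
theorem Dop_bijective {C : Type*} [NonUnitalCStarAlgebra C]
    (b : ℝ × ℝ → C) (hb : IsBC b) :
    (IsBC (fun p : ℝ × ℝ =>
        ∫ q : ℝ × ℝ, (gamma2 q.1 * gamma2 q.2) • b (p.1 - q.1, p.2 - q.2))) ∧
    Dop (fun p : ℝ × ℝ =>
        ∫ q : ℝ × ℝ, (gamma2 q.1 * gamma2 q.2) • b (p.1 - q.1, p.2 - q.2)) = b ∧
    (∀ a' : ℝ × ℝ → C, IsBC a' → Dop a' = b →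
      a' = fun p : ℝ × ℝ =>
        ∫ q : ℝ × ℝ, (gamma2 q.1 * gamma2 q.2) • b (p.1 - q.1, p.2 - q.2)) := by
  simpa [Dop_eq_onePlusDeriv, ← isBC_iff_hasBoundedDerivs, Prod.sub_def] using
    Dop_bijective_general (1, 0) (0, 1) b (isBC_iff_hasBoundedDerivs.1 hb)
end

section
/- Let C be a C*-algebra. The identity map on the C-valued Schwartz space S^C(ℝⁿ) extends to a continuous injective linear map I: L²(ℝⁿ, C) → E_n satisfying ‖I(g)‖₂ ≤ ‖g‖_{L²}, where E_n is the Hilbert C*-module completion of S^C(ℝⁿ) with respect to ‖f‖₂ = ‖∫ f(x)*f(x) dx‖_C^{1/2} and ‖g‖_{L²} = (∫ ‖g(x)‖_C² dx)^{1/2}. -/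
open MeasureTheory SchwartzMap

/-!
On `L²(μ, C)` the integral `∫ star (f x) * g x` defines a continuous `C`-valued inner product with
`‖⟨f, g⟩‖ ≤ ‖f‖ ‖g‖`, so `j` is bounded for the `L²` norm and extends from the dense Schwartz space
to all of `L²`; by continuity the extension `I` still satisfies `‖I g‖ = ‖⟨g, g⟩‖ ^ (1 / 2)`.
If `I g = 0`, the integral of the positive function `star (g x) * g x` vanishes, which forces
`g = 0`: each integral over a measurable set is squeezed between `0` and the total integral.
-/

section Integral

variable {X V : Type*} [MeasurableSpace X] {μ : Measure X}
  [NormedAddCommGroup V] [NormedSpace ℝ V] [CompleteSpace V]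
  [PartialOrder V] [IsOrderedAddMonoid V] [IsOrderedModule ℝ V] [OrderClosedTopology V]

lemma ae_eq_zero_of_integral_eq_zero_of_nonneg_ae {f : X → V} (hf : 0 ≤ᵐ[μ] f)
    (hfi : Integrable f μ) (h : ∫ x, f x ∂μ = 0) : f =ᵐ[μ] 0 :=
  hfi.ae_eq_zero_of_forall_setIntegral_eq_zero fun _ _ _ =>
    le_antisymm ((setIntegral_le_integral hfi hf).trans_eq h)
      (integral_nonneg_of_ae (ae_restrict_of_ae hf))

end Integral

section TemperateGrowth

variable {D : Type*} [NormedAddCommGroup D] [MeasurableSpace D]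

lemma isFiniteMeasureOnCompacts_of_hasTemperateGrowth (μ : Measure D) [μ.HasTemperateGrowth] :
    IsFiniteMeasureOnCompacts μ where
  lt_top_of_isCompact K hK := by
    obtain ⟨R, hR, norm_le⟩ := hK.isBounded.exists_pos_norm_le
    refine (measure_mono fun x hx => ?_).trans_lt <|
      (μ.integrable_pow_neg_integrablePower).measure_ge_lt_top
        (Real.rpow_pos_of_pos (by linarith : 0 < 1 + R) (-(μ.integrablePower : ℝ)))
    exact Real.rpow_le_rpow_of_nonpos (by positivity) (by gcongr; exact norm_le x hx) (by simp)

end TemperateGrowth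

section LpStar

variable {X R : Type*} [MeasurableSpace X] {μ : Measure X}
  [NormedAddCommGroup R] [StarAddMonoid R] [NormedStarGroup R] {p : ENNReal}

noncomputable instance lpStarAddMonoid : StarAddMonoid (Lp R p μ) where
  star_add f g := by
    refine Lp.ext ?_
    filter_upwards [Lp.coeFn_star (f + g), Lp.coeFn_add f g, Lp.coeFn_add (star f) (star g),
      Lp.coeFn_star f, Lp.coeFn_star g] with x star_fg add_fg add_star star_f star_g
    simp only [star_fg, add_fg, add_star, star_f, star_g, Pi.star_apply, Pi.add_apply, star_add]

instance lpNormedStarGroup [Fact (1 ≤ p)] : NormedStarGroup (Lp R p μ) where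
  norm_star_le f := by
    rw [Lp.norm_def, Lp.norm_def, eLpNorm_congr_ae (Lp.coeFn_star f), eLpNorm_star]

end LpStar

section LpPairing

variable {X 𝕜 E F G : Type*} [MeasurableSpace X] {μ : Measure X} {p q : ENNReal}
  [Fact (1 ≤ p)] [Fact (1 ≤ q)] [ENNReal.HolderConjugate p q] [NontriviallyNormedField 𝕜]
  [NormedAddCommGroup E] [NormedAddCommGroup F] [NormedAddCommGroup G]
  [NormedSpace 𝕜 E] [NormedSpace 𝕜 F] [NormedSpace 𝕜 G]
  [NormedSpace ℝ G] [SMulCommClass ℝ 𝕜 G] [CompleteSpace G]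

lemma norm_lpPairing_apply_apply_le (B : E →L[𝕜] F →L[𝕜] G) (f : Lp E p μ) (g : Lp F q μ) :
    ‖B.lpPairing μ p q f g‖ ≤ ‖B‖ * ‖f‖ * ‖g‖ := by
  have lpPairing_eq : B.lpPairing μ p q f g = L1.integral (B.holder 1 f g) := by
    rw [B.lpPairing_eq_integral, L1.integral_eq_integral, integral_congr_ae (B.coeFn_holder f g)]
  rw [lpPairing_eq]
  exact (L1.norm_integral_le _).trans (B.norm_holder_apply_apply_le f g)

end LpPairing

section CstarInner

variable {X A : Type*} [MeasurableSpace X] {μ : Measure X}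
  [NonUnitalNormedRing A] [StarRing A] [NormedSpace ℝ A]

/-- The `A`-valued inner product on `L²(μ, A)`, with the star on the first variable; on Schwartz
functions it is the inner product of the Hilbert C*-module `E_n`. -/
noncomputable def cstarInner (f g : Lp A 2 μ) : A := ∫ x, star (f x) * g x ∂μ

/-- The norm `‖g‖₂ = ‖⟨g, g⟩‖ ^ (1 / 2)` of the Hilbert C*-module `E_n`, on elements of `L²`. -/
noncomputable def hilbertModuleNorm (g : Lp A 2 μ) : ℝ := √‖cstarInner g g‖

variable [NormedStarGroup A] [IsScalarTower ℝ A A] [SMulCommClass ℝ A A]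

lemma integrable_star_mul (f g : Lp A 2 μ) : Integrable (fun x => star (f x) * g x) μ :=
  memLp_one_iff_integrable.1 <|
    (ContinuousLinearMap.mul ℝ A).memLp_of_bilin 1 (Lp.memLp f).star (Lp.memLp g)

variable [CompleteSpace A]

lemma cstarInner_eq_lpPairing (f g : Lp A 2 μ) :
    cstarInner f g = (ContinuousLinearMap.mul ℝ A).lpPairing μ 2 2 (star f) g := by
  rw [ContinuousLinearMap.lpPairing_eq_integral]
  refine integral_congr_ae ?_
  filter_upwards [Lp.coeFn_star f] with x hx
  simp [hx]

lemma norm_cstarInner_le (f g : Lp A 2 μ) : ‖cstarInner f g‖ ≤ ‖f‖ * ‖g‖ :=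
  calc ‖cstarInner f g‖ ≤ ‖ContinuousLinearMap.mul ℝ A‖ * ‖star f‖ * ‖g‖ :=
        cstarInner_eq_lpPairing f g ▸ norm_lpPairing_apply_apply_le _ _ _
    _ ≤ 1 * ‖f‖ * ‖g‖ := by
        rw [norm_star]
        gcongr
        exact ContinuousLinearMap.opNorm_mul_le ℝ A
    _ = ‖f‖ * ‖g‖ := by rw [one_mul]

lemma continuous_cstarInner : Continuous fun fg : Lp A 2 μ × Lp A 2 μ => cstarInner fg.1 fg.2 := by
  simp only [cstarInner_eq_lpPairing]
  fun_prop

lemma hilbertModuleNorm_le_norm (g : Lp A 2 μ) : hilbertModuleNorm g ≤ ‖g‖ :=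
  Real.sqrt_le_iff.2 ⟨norm_nonneg g, (norm_cstarInner_le g g).trans_eq (sq ‖g‖).symm⟩

lemma continuous_hilbertModuleNorm : Continuous (hilbertModuleNorm : Lp A 2 μ → ℝ) :=
  (continuous_cstarInner.comp (continuous_id.prodMk continuous_id)).norm.sqrt

end CstarInner

section CStarAlgebra

variable {X C : Type*} [MeasurableSpace X] {μ : Measure X} [NonUnitalCStarAlgebra C]

lemma eq_zero_of_cstarInner_self_eq_zero {g : Lp C 2 μ} (h : cstarInner g g = 0) : g = 0 := by
  let _ : PartialOrder C := CStarAlgebra.spectralOrder C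
  have _ : StarOrderedRing C := CStarAlgebra.spectralOrderedRing C
  have star_mul_self_ae : (fun x => star (g x) * g x) =ᵐ[μ] 0 :=
    ae_eq_zero_of_integral_eq_zero_of_nonneg_ae
      (.of_forall fun x => star_mul_self_nonneg (g x)) (integrable_star_mul g g) h
  rw [Lp.eq_zero_iff_ae_eq_zero]
  exact star_mul_self_ae.mono fun x hx => (CStarRing.star_mul_self_eq_zero_iff (g x)).1 hx

lemma eq_zero_of_hilbertModuleNorm_eq_zero {g : Lp C 2 μ} (h : hilbertModuleNorm g = 0) : g = 0 :=
  eq_zero_of_cstarInner_self_eq_zero <| norm_eq_zero.1 <| (Real.sqrt_eq_zero (norm_nonneg _)).1 h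

end CStarAlgebra

section Extension

variable {𝕜 𝕜₂ S L F : Type*} [NormedDivisionRing 𝕜] [NormedDivisionRing 𝕜₂] {σ : 𝕜 →+* 𝕜₂}
  [AddCommGroup S] [SeminormedAddCommGroup L] [NormedAddCommGroup F]
  [Module 𝕜 S] [Module 𝕜 L] [IsBoundedSMul 𝕜 L] [Module 𝕜₂ F] [IsBoundedSMul 𝕜₂ F]
  [CompleteSpace F]

lemma norm_extendOfNorm_apply_eq {f : S →ₛₗ[σ] F} {e : S →ₗ[𝕜] L} (he : DenseRange e)
    (hbound : ∃ K, ∀ x, ‖f x‖ ≤ K * ‖e x‖) {N : L → ℝ} (hN : Continuous N)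
    (hf : ∀ x, ‖f x‖ = N (e x)) (y : L) : ‖f.extendOfNorm e y‖ = N y :=
  he.induction_on (p := fun y => ‖f.extendOfNorm e y‖ = N y) y
    (isClosed_eq (f.extendOfNorm e).continuous.norm hN) fun x => by
      rw [LinearMap.extendOfNorm_eq he hbound, hf]

end Extension

section Schwartz

variable {D : Type*} [NormedAddCommGroup D] [NormedSpace ℝ D] [MeasurableSpace D] [BorelSpace D]
  [SecondCountableTopology D] {μ : Measure D} [μ.HasTemperateGrowth]
  {A : Type*} [NonUnitalNormedRing A] [StarRing A] [NormedSpace ℝ A]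

lemma hilbertModuleNorm_toLp (f : 𝓢(D, A)) :
    hilbertModuleNorm (f.toLp 2 μ) = √‖∫ x, star (f x) * f x ∂μ‖ := by
  have cstarInner_toLp : cstarInner (f.toLp 2 μ) (f.toLp 2 μ) = ∫ x, star (f x) * f x ∂μ :=
    integral_congr_ae <| (f.coeFn_toLp 2 μ).mono fun x hx => by simp only [hx]
  rw [hilbertModuleNorm, cstarInner_toLp]

end Schwartz

theorem l2_embeds_into_hilbert_module_general
    {C : Type*} [NonUnitalCStarAlgebra C]
    {D : Type*} [NormedAddCommGroup D] [NormedSpace ℝ D] [FiniteDimensional ℝ D]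
    [MeasurableSpace D] [BorelSpace D]
    (μ : Measure D) [μ.HasTemperateGrowth]
    {E : Type*} [NormedAddCommGroup E] [NormedSpace ℂ E] [CompleteSpace E]
    (j : 𝓢(D, C) →ₗ[ℂ] E)
    (hj : ∀ f : 𝓢(D, C), ‖j f‖ = √‖∫ x, star (f x) * f x ∂μ‖) :
    ∃ I : Lp C 2 μ →ₗ[ℂ] E, Continuous I ∧ Function.Injective I ∧
      (∀ (g : Lp C 2 μ) (f : 𝓢(D, C)), g =ᵐ[μ] f → I g = j f) ∧ ∀ g : Lp C 2 μ, ‖I g‖ ≤ ‖g‖ := by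
  have := isFiniteMeasureOnCompacts_of_hasTemperateGrowth μ
  let T : 𝓢(D, C) →ₗ[ℂ] Lp C 2 μ := (toLpCLM ℂ C 2 μ).toLinearMap
  have hT : DenseRange T := denseRange_toLpCLM (F := C) ENNReal.ofNat_ne_top
  have hjT (f) : ‖j f‖ = hilbertModuleNorm (T f) := (hj f).trans (hilbertModuleNorm_toLp f).symm
  have hbound : ∃ K, ∀ f, ‖j f‖ ≤ K * ‖T f‖ :=
    ⟨1, fun f => by simpa [hjT] using hilbertModuleNorm_le_norm (T f)⟩
  let I : Lp C 2 μ →L[ℂ] E := j.extendOfNorm T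
  have norm_I (g) : ‖I g‖ = hilbertModuleNorm g :=
    norm_extendOfNorm_apply_eq hT hbound continuous_hilbertModuleNorm hjT g
  refine ⟨I.toLinearMap, I.continuous, (injective_iff_map_eq_zero I).2 fun g hg => ?_,
    fun g f hgf => ?_, fun g => (norm_I g).trans_le (hilbertModuleNorm_le_norm g)⟩
  · exact eq_zero_of_hilbertModuleNorm_eq_zero ((norm_I g).symm.trans (norm_eq_zero.2 hg))
  · obtain rfl : g = T f := Lp.ext (hgf.trans (f.coeFn_toLp 2 μ).symm)
    exact LinearMap.extendOfNorm_eq hT hbound f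

/-- Let `C` be a C*-algebra and let `E_n` be (any realization of) the Hilbert C*-module
completion of the `C`-valued Schwartz space `S^C(ℝⁿ)` with respect to the norm
`‖f‖₂ = ‖∫ f(x)* f(x) dx‖^{1/2}`, i.e. a Banach space `E` together with a linear map
`j : S^C(ℝⁿ) → E` with dense range satisfying `‖j f‖ = ‖f‖₂`.  Then the identity map on
`S^C(ℝⁿ)` extends to a continuous injective linear map `I : L²(ℝⁿ, C) → E_n` with
`‖I g‖ ≤ ‖g‖_{L²}`. -/
theorem l2_embeds_into_hilbert_module
    {C : Type*} [NonUnitalCStarAlgebra C] (n : ℕ)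
    (E : Type*) [NormedAddCommGroup E] [NormedSpace ℂ E] [CompleteSpace E]
    (j : 𝓢(EuclideanSpace ℝ (Fin n), C) →ₗ[ℂ] E)
    (hj : ∀ f : 𝓢(EuclideanSpace ℝ (Fin n), C),
      ‖j f‖ = Real.sqrt ‖∫ x : EuclideanSpace ℝ (Fin n), star (f x) * f x‖)
    (hdense : DenseRange j) :
    ∃ I : Lp C 2 (volume : Measure (EuclideanSpace ℝ (Fin n))) →ₗ[ℂ] E,
      Continuous I ∧ Function.Injective I ∧
      (∀ (g : Lp C 2 (volume : Measure (EuclideanSpace ℝ (Fin n))))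
        (f : 𝓢(EuclideanSpace ℝ (Fin n), C)), (↑↑g : EuclideanSpace ℝ (Fin n) → C) =ᵐ[volume] ⇑f →
          I g = j f) ∧
      ∀ g : Lp C 2 (volume : Measure (EuclideanSpace ℝ (Fin n))), ‖I g‖ ≤ ‖g‖ :=
  l2_embeds_into_hilbert_module_general volume j hj
end
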